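/- arXiv:2012.14698 — 6 statements merged into one kernel-verified Lean document; each statement's English description precedes it below -/
import Mathlib

section
/- Let G ⊆ ℝ^p_+ × {0,1}^n be a set such that for every fixed binary vector z̄ ∈ {0,1}^n the slice G|_{z=z̄} := G ∩ {(y,z) : z = z̄} is convex, and for each j ∈ [p] let K_j ⊆ ℝ^{q_j} be a convex cone, A^j ∈ ℝ^{q_j×m}, B^j ∈ ℝ^{q_j}. Define Q(G,{K_j}) := {(x,y,z) ∈ ℝ^{mp} × ℝ^p × {0,1}^n : (y,z) ∈ G, A^j x^j + B^j y_j ∈ K_j for all j ∈ [p]}, where x = (x^1,…,x^p) with each x^j ∈ ℝ^m. Then the convex hull of Q(G,{K_j}) equals Q̂(G,{K_j}) := {(x,y,z) ∈ ℝ^{mp} × ℝ^p × [0,1]^n : (y,z) ∈ conv(G), A^j x^j + B^j y_j ∈ K_j for all j ∈ [p]}. -/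
/-!
Write `(y, z) ∈ conv(G)` as a convex combination of points `(y_k, z_k) ∈ G` with weights `w_k > 0`,
and distribute `x` over these points block by block in proportion to `y`: the `k`-th point receives
the block `c_kj • x_j` with `c_kj = y_kj / y_j`. This turns the `j`-th conic constraint at `(x, y)`
into its multiple by `c_kj ≥ 0`, and `∑ k, w_k * c_kj = 1` reassembles `x`. If `y_j = 0`,
nonnegativity forces `y_kj = 0` for all `k`, and `c_kj = 1` works.
-/

section ConicLift

variable {𝕜 ι Z : Type*} {X W : ι → Type*} [Semiring 𝕜]
  [∀ j, AddCommMonoid (X j)] [∀ j, Module 𝕜 (X j)]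
  [∀ j, AddCommMonoid (W j)] [∀ j, Module 𝕜 (W j)]

/-- The set `Q(G, {K_j})` of points `(x, y, z)` that lie over `G` and satisfy the conic constraints
`A j (x j) + y j • B j ∈ K j`. The matrices of the paper become linear maps, the blocks `x j` may
live in different spaces, and `z` ranges over an arbitrary type. -/
def conicLift (G : Set ((ι → 𝕜) × Z)) (K : ∀ j, Set (W j)) (A : ∀ j, X j →ₗ[𝕜] W j)
    (B : ∀ j, W j) : Set ((∀ j, X j) × (ι → 𝕜) × Z) :=
  {w | w.2 ∈ G ∧ ∀ j, A j (w.1 j) + w.2.1 j • B j ∈ K j}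

variable {G H : Set ((ι → 𝕜) × Z)} {K : ∀ j, Set (W j)} {A : ∀ j, X j →ₗ[𝕜] W j} {B : ∀ j, W j}

lemma conicLift_mono (h : G ⊆ H) : conicLift G K A B ⊆ conicLift H K A B :=
  fun _ hw ↦ ⟨h hw.1, hw.2⟩

variable [PartialOrder 𝕜]

lemma smul_mem_conicLift {x : ∀ j, X j} {y y' c : ι → 𝕜} {z z' : Z}
    (hKsmul : ∀ j, ∀ c : 𝕜, 0 ≤ c → ∀ a ∈ K j, c • a ∈ K j) (h : (x, y, z) ∈ conicLift H K A B)
    (hc : 0 ≤ c) (hcy : c * y = y') (hG : (y', z') ∈ G) :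
    (c • x, y', z') ∈ conicLift G K A B := by
  refine ⟨hG, fun j ↦ ?_⟩
  simpa [← hcy, mul_smul] using hKsmul j (c j) (hc j) _ (h.2 j)

lemma convex_conicLift [AddCommMonoid Z] [Module 𝕜 Z] (hG : Convex 𝕜 G)
    (hK : ∀ j, Convex 𝕜 (K j)) : Convex 𝕜 (conicLift G K A B) := by
  rintro ⟨x, yz⟩ ⟨hyz, hx⟩ ⟨x', yz'⟩ ⟨hyz', hx'⟩ a b ha hb hab
  refine ⟨hG hyz hyz' ha hb hab, fun j ↦ ?_⟩
  simpa [add_smul, mul_smul, add_add_add_comm] using hK j (hx j) (hx' j) ha hb hab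

end ConicLift

section Field

variable {𝕜 : Type*} [Field 𝕜] [LinearOrder 𝕜] [IsStrictOrderedRing 𝕜]

lemma exists_nonneg_mul_sum_eq {κ : Type*} [Fintype κ] {w u : κ → 𝕜} (hw : ∀ k, 0 < w k)
    (hw_sum : ∑ k, w k = 1) (hu : ∀ k, 0 ≤ u k) :
    ∃ c : κ → 𝕜, (∀ k, 0 ≤ c k) ∧ (∀ k, c k * ∑ i, w i * u i = u k) ∧ ∑ k, w k * c k = 1 := by
  have hwu : ∀ k, 0 ≤ w k * u k := fun k ↦ mul_nonneg (hw k).le (hu k)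
  obtain hs | hs := eq_or_ne (∑ i, w i * u i) 0
  · have hu_zero : ∀ k, u k = 0 := fun k ↦ by
      have hwu_zero := (Fintype.sum_eq_zero_iff_of_nonneg hwu).mp hs
      exact (mul_eq_zero.mp (congrFun hwu_zero k)).resolve_left (hw k).ne'
    exact ⟨1, fun _ ↦ zero_le_one, fun k ↦ by simp [hu_zero], by simpa using hw_sum⟩
  · refine ⟨fun k ↦ u k / ∑ i, w i * u i,
      fun k ↦ div_nonneg (hu k) (Finset.sum_nonneg fun i _ ↦ hwu i),
      fun k ↦ div_mul_cancel₀ _ hs, ?_⟩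
    simp only [← mul_div_assoc, ← Finset.sum_div, div_self hs]

variable {ι Z : Type*} {X W : ι → Type*} [AddCommGroup Z] [Module 𝕜 Z]
  [∀ j, AddCommGroup (X j)] [∀ j, Module 𝕜 (X j)] [∀ j, AddCommGroup (W j)] [∀ j, Module 𝕜 (W j)]
  {G : Set ((ι → 𝕜) × Z)} {K : ∀ j, Set (W j)} {A : ∀ j, X j →ₗ[𝕜] W j} {B : ∀ j, W j}

lemma conicLift_convexHull_subset (hG : ∀ yz ∈ G, 0 ≤ yz.1)
    (hKsmul : ∀ j, ∀ c : 𝕜, 0 ≤ c → ∀ a ∈ K j, c • a ∈ K j) :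
    conicLift (convexHull 𝕜 G) K A B ⊆ convexHull 𝕜 (conicLift G K A B) := by
  rintro ⟨x, y, z⟩ h
  obtain ⟨κ, _, v, w, hv, -, hw, hw_sum, hwv⟩ := eq_pos_convex_span_of_mem_convexHull h.1
  have hvG : ∀ k, v k ∈ G := fun k ↦ hv ⟨k, rfl⟩
  have hy : ∀ j, ∑ k, w k * (v k).1 j = y j := fun j ↦ by
    simpa [Prod.fst_sum] using congrFun (congrArg Prod.fst hwv) j
  choose c hc hc_mul hc_sum using fun j ↦
    exists_nonneg_mul_sum_eq hw hw_sum fun k ↦ hG _ (hvG k) j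
  have hx : ∑ k, w k • (fun j ↦ c j k • x j) = x := by
    ext j
    simp [smul_smul, ← Finset.sum_smul, hc_sum]
  have hxyz : ∑ k, w k • ((fun j ↦ c j k • x j, v k) : (∀ j, X j) × (ι → 𝕜) × Z) = (x, y, z) :=
    Prod.ext (by simpa [Prod.fst_sum] using hx) (by simpa [Prod.snd_sum] using hwv)
  have hcy : ∀ k, (fun j ↦ c j k) * y = (v k).1 := fun k ↦ by
    ext j
    rw [Pi.mul_apply, ← hy j, hc_mul]
  rw [← hxyz]
  exact (convex_convexHull 𝕜 _).sum_mem (fun k _ ↦ (hw k).le) hw_sum fun k _ ↦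
    subset_convexHull 𝕜 _ (smul_mem_conicLift hKsmul h (fun j ↦ hc j k) (hcy k) (hvG k))

theorem conv_trick_general (hG : ∀ yz ∈ G, 0 ≤ yz.1)
    (hKadd : ∀ j, ∀ a ∈ K j, ∀ b ∈ K j, a + b ∈ K j)
    (hKsmul : ∀ j, ∀ c : 𝕜, 0 ≤ c → ∀ a ∈ K j, c • a ∈ K j) :
    convexHull 𝕜 (conicLift G K A B) = conicLift (convexHull 𝕜 G) K A B := by
  have hK : ∀ j, Convex 𝕜 (K j) := fun j a ha b hb s t hs ht _ ↦
    hKadd j _ (hKsmul j s hs a ha) _ (hKsmul j t ht b hb)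
  exact (convexHull_min (conicLift_mono (subset_convexHull 𝕜 G))
    (convex_conicLift (convex_convexHull 𝕜 G) hK)).antisymm
    (conicLift_convexHull_subset hG hKsmul)

end Field

lemma map_mem_Icc_of_mem_convexHull {𝕜 E : Type*} [CommSemiring 𝕜] [PartialOrder 𝕜]
    [IsOrderedRing 𝕜] [AddCommMonoid E] [Module 𝕜 E] {s : Set E} {x : E} (f : E →ₗ[𝕜] 𝕜)
    (hs : ∀ x ∈ s, f x = 0 ∨ f x = 1) (hx : x ∈ convexHull 𝕜 s) : f x ∈ Set.Icc 0 1 := by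
  refine convexHull_min (fun x hx ↦ ?_) ((convex_Icc 0 1).linear_preimage f) hx
  rcases hs x hx with h | h <;> simp [h]

/-- Proposition 1 (conv-trick): for `G ⊆ ℝ^p_+ × {0,1}^n` with convex slices at every
fixed binary `z̄`, and convex cones `K j`, the convex hull of
`Q(G,{K_j}) = {(x,y,z) : (y,z) ∈ G, Aʲxʲ + Bʲyⱼ ∈ K_j ∀j}` equals
`Q̂(G,{K_j}) = {(x,y,z) ∈ ℝ^{mp} × ℝ^p × [0,1]^n : (y,z) ∈ conv(G), Aʲxʲ + Bʲyⱼ ∈ K_j ∀j}`. -/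
theorem conv_trick (p n m : ℕ) (q : Fin p → ℕ)
    (G : Set ((Fin p → ℝ) × (Fin n → ℝ)))
    (hGsub : ∀ yz ∈ G, (∀ j, 0 ≤ yz.1 j) ∧ (∀ i, yz.2 i = 0 ∨ yz.2 i = 1))
    (hGslice : ∀ zbar : Fin n → ℝ, (∀ i, zbar i = 0 ∨ zbar i = 1) →
      Convex ℝ {yz ∈ G | yz.2 = zbar})
    (K : ∀ j, Set (Fin (q j) → ℝ))
    (hKadd : ∀ j, ∀ a ∈ K j, ∀ b ∈ K j, a + b ∈ K j)
    (hKsmul : ∀ j, ∀ c : ℝ, 0 ≤ c → ∀ a ∈ K j, c • a ∈ K j)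
    (A : ∀ j, Matrix (Fin (q j)) (Fin m) ℝ) (B : ∀ j, Fin (q j) → ℝ)
    (Q Qhat : Set ((Fin p → Fin m → ℝ) × (Fin p → ℝ) × (Fin n → ℝ)))
    (hQ : Q = {w | (w.2.1, w.2.2) ∈ G ∧
      ∀ j, (A j).mulVec (w.1 j) + w.2.1 j • B j ∈ K j})
    (hQhat : Qhat = {w | (∀ i, w.2.2 i ∈ Set.Icc (0:ℝ) 1) ∧
      (w.2.1, w.2.2) ∈ convexHull ℝ G ∧
      ∀ j, (A j).mulVec (w.1 j) + w.2.1 j • B j ∈ K j}) :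
    convexHull ℝ Q = Qhat := by
  subst hQ hQhat
  have hbox : ∀ yz ∈ convexHull ℝ G, ∀ i, yz.2 i ∈ Set.Icc (0 : ℝ) 1 := fun yz hyz i ↦
    map_mem_Icc_of_mem_convexHull (LinearMap.proj i ∘ₗ LinearMap.snd ℝ _ _)
      (fun yz hyz ↦ (hGsub yz hyz).2 i) hyz
  exact (conv_trick_general (A := fun j ↦ (A j).mulVecLin) (fun yz hyz ↦ (hGsub yz hyz).1)
    hKadd hKsmul).trans (Set.ext fun w ↦ ⟨fun hw ↦ ⟨hbox w.2 hw.1, hw⟩, And.right⟩)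
end

section
/- For each j ∈ [p], let f_j : {0,1}^n → ℝ_+ be a nonnegative function and K_j ⊆ ℝ^{q_j} a convex cone containing the origin, and let A^j ∈ ℝ^{q_j×m}, B^j ∈ ℝ^{q_j}. Then conv(S({f_j},{K_j})) = Ŝ({f_j},{K_j}). -/
/-!
Over `t ≥ 0`, the fibre `{x | (x, t) ∈ C}` of a convex cone `C` through the origin depends affinely
on `t`: a point over `t = a * t₁ + b * t₂ > 0` is the average, with weights `a` and `b`, of its
dilates by `t₁ / t` and `t₂ / t`, which lie over `t₁` and `t₂`. If `t = 0` then `t₁ = t₂ = 0`, and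
the point is its own average. Consequently the pairs `(y, z)` with `y ≥ 0` such that `conv(S)`
contains `(x, z)` for every `x` satisfying the conic constraints with `y` form a convex set; it
contains `G`, hence `conv(G)`.
-/

lemma snd_mem_Icc_of_mem_convexHull {R E κ : Type*} [Semiring R] [PartialOrder R]
    [IsOrderedRing R] [AddCommMonoid E] [Module R E] {G : Set (E × (κ → R))}
    (hG : ∀ p ∈ G, ∀ i, p.2 i = 0 ∨ p.2 i = 1) {p : E × (κ → R)} (hp : p ∈ convexHull R G) (i : κ) :
    p.2 i ∈ Set.Icc 0 1 := by
  let evalSnd : E × (κ → R) →ₗ[R] R := LinearMap.proj i ∘ₗ LinearMap.snd R E (κ → R)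
  refine convexHull_min (fun w hw ↦ ?_) ((convex_Icc 0 1).linear_preimage evalSnd) hp
  obtain h | h := hG w hw i <;> simp [evalSnd, h]

section ConeLift

variable {𝕜 : Type*} [Semifield 𝕜] [LinearOrder 𝕜] [IsStrictOrderedRing 𝕜]

lemma exists_nonneg_scalars_of_convexCombination {a b s t : 𝕜} (ha : 0 < a) (hb : 0 < b)
    (hab : a + b = 1) (hs : 0 ≤ s) (ht : 0 ≤ t) :
    ∃ c d : 𝕜, 0 ≤ c ∧ 0 ≤ d ∧ a * c + b * d = 1 ∧
      c * (a * s + b * t) = s ∧ d * (a * s + b * t) = t := by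
  have has : 0 ≤ a * s := by positivity
  have hbt : 0 ≤ b * t := by positivity
  obtain h | h := eq_or_ne (a * s + b * t) 0
  · obtain ⟨hs0, ht0⟩ := (add_eq_zero_iff_of_nonneg has hbt).mp h
    obtain rfl : s = 0 := (mul_eq_zero.mp hs0).resolve_left ha.ne'
    obtain rfl : t = 0 := (mul_eq_zero.mp ht0).resolve_left hb.ne'
    exact ⟨1, 1, zero_le_one, zero_le_one, by simpa using hab, by simp, by simp⟩
  · refine ⟨s / (a * s + b * t), t / (a * s + b * t), by positivity, by positivity, ?_,
      div_mul_cancel₀ s h, div_mul_cancel₀ t h⟩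
    rw [← mul_div_assoc, ← mul_div_assoc, ← add_div, div_self h]

lemma exists_convexCombination_of_mem_pointedCone {E : Type*} [AddCommMonoid E] [Module 𝕜 E]
    {C : PointedCone 𝕜 (E × 𝕜)} {x : E} {a b s t : 𝕜} (ha : 0 < a) (hb : 0 < b)
    (hab : a + b = 1) (hs : 0 ≤ s) (ht : 0 ≤ t) (hx : (x, a * s + b * t) ∈ C) :
    ∃ u v : E, (u, s) ∈ C ∧ (v, t) ∈ C ∧ a • u + b • v = x := by
  obtain ⟨c, d, hc, hd, hcd, hcs, hdt⟩ :=
    exists_nonneg_scalars_of_convexCombination ha hb hab hs ht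
  refine ⟨c • x, d • x, ?_, ?_, ?_⟩
  · simpa [hcs] using C.smul_mem hc hx
  · simpa [hdt] using C.smul_mem hd hx
  · rw [smul_smul, smul_smul, ← add_smul, hcd, one_smul]

variable {ι F : Type*} {E : ι → Type*} [∀ j, AddCommMonoid (E j)] [∀ j, Module 𝕜 (E j)]

/-- The points `(x, z)` admitting a `y` with `(y, z) ∈ G` that satisfies the conic constraints
`(x j, y j) ∈ C j`. Applied to the set `G` of the paper and to its convex hull, with `C j` the cone
`A j *ᵥ x j + y j • B j ∈ K j`, it gives the sets `S` and `Ŝ`. -/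
def coneLift (C : ∀ j, PointedCone 𝕜 (E j × 𝕜)) (G : Set ((ι → 𝕜) × F)) :
    Set ((∀ j, E j) × F) :=
  {w | ∃ y, (y, w.2) ∈ G ∧ ∀ j, (w.1 j, y j) ∈ C j}

variable (C : ∀ j, PointedCone 𝕜 (E j × 𝕜)) {G : Set ((ι → 𝕜) × F)}

lemma coneLift_mono {H : Set ((ι → 𝕜) × F)} (h : G ⊆ H) : coneLift C G ⊆ coneLift C H :=
  fun _ ⟨y, hy, hC⟩ ↦ ⟨y, h hy, hC⟩

variable [AddCommMonoid F] [Module 𝕜 F]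

lemma convex_coneLift (hG : Convex 𝕜 G) : Convex 𝕜 (coneLift C G) := by
  rintro _ ⟨y, hy, hC⟩ _ ⟨y', hy', hC'⟩ a b ha hb hab
  exact ⟨a • y + b • y', hG hy hy' ha hb hab,
    fun j ↦ (C j).add_mem ((C j).smul_mem ha (hC j)) ((C j).smul_mem hb (hC' j))⟩

lemma convex_setOf_nonneg_fiber_subset {T : Set ((∀ j, E j) × F)} (hT : Convex 𝕜 T) :
    Convex 𝕜 {p : (ι → 𝕜) × F |
      0 ≤ p.1 ∧ ∀ x : ∀ j, E j, (∀ j, (x j, p.1 j) ∈ C j) → (x, p.2) ∈ T} := by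
  rw [convex_iff_forall_pos]
  rintro ⟨y, z⟩ ⟨hy, hyT⟩ ⟨y', z'⟩ ⟨hy', hyT'⟩ a b ha hb hab
  refine ⟨add_nonneg (smul_nonneg ha.le hy) (smul_nonneg hb.le hy'), fun x hx ↦ ?_⟩
  choose u v hu hv huv using fun j ↦
    exists_convexCombination_of_mem_pointedCone ha hb hab (hy j) (hy' j) (hx j)
  obtain rfl : a • u + b • v = x := funext huv
  exact hT (hyT u hu) (hyT' v hv) ha.le hb.le hab

theorem conv_S_eq_Shat_general (hG : ∀ p ∈ G, 0 ≤ p.1) :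
    convexHull 𝕜 (coneLift C G) = coneLift C (convexHull 𝕜 G) := by
  apply Set.Subset.antisymm
  · exact convexHull_min (coneLift_mono C (subset_convexHull 𝕜 G))
      (convex_coneLift C (convex_convexHull 𝕜 G))
  · rintro ⟨x, z⟩ ⟨y, hy, hxy⟩
    refine (convexHull_min (fun p hp ↦ ?_)
      (convex_setOf_nonneg_fiber_subset C (convex_convexHull 𝕜 (coneLift C G))) hy).2 x hxy
    exact ⟨hG p hp, fun x' hx' ↦ subset_convexHull 𝕜 _ ⟨p.1, hp, hx'⟩⟩

end ConeLift

/-- Theorem 1: for nonnegative functions `f_j : {0,1}^n → ℝ_+` and convex cones `K_j`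
containing the origin, `conv(S({f_j},{K_j})) = Ŝ({f_j},{K_j})`. -/
theorem conv_S_eq_Shat (p n m : ℕ) (q : Fin p → ℕ)
    (f : Fin p → (Fin n → ℝ) → ℝ)
    (hf : ∀ j, ∀ z : Fin n → ℝ, (∀ i, z i = 0 ∨ z i = 1) → 0 ≤ f j z)
    (K : ∀ j, Set (Fin (q j) → ℝ))
    (hK0 : ∀ j, (0 : Fin (q j) → ℝ) ∈ K j)
    (hKadd : ∀ j, ∀ a ∈ K j, ∀ b ∈ K j, a + b ∈ K j)
    (hKsmul : ∀ j, ∀ c : ℝ, 0 ≤ c → ∀ a ∈ K j, c • a ∈ K j)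
    (A : ∀ j, Matrix (Fin (q j)) (Fin m) ℝ) (B : ∀ j, Fin (q j) → ℝ)
    (S Shat : Set ((Fin p → Fin m → ℝ) × (Fin n → ℝ)))
    (G : Set ((Fin p → ℝ) × (Fin n → ℝ)))
    (hS : S = {w | (∀ i, w.2 i = 0 ∨ w.2 i = 1) ∧ ∃ y : Fin p → ℝ,
      ∀ j, f j w.2 ≤ y j ∧ (A j).mulVec (w.1 j) + y j • B j ∈ K j})
    (hG : G = {yz | (∀ i, yz.2 i = 0 ∨ yz.2 i = 1) ∧ ∀ j, f j yz.2 ≤ yz.1 j})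
    (hShat : Shat = {w | (∀ i, w.2 i ∈ Set.Icc (0:ℝ) 1) ∧ ∃ y : Fin p → ℝ,
      (y, w.2) ∈ convexHull ℝ G ∧
      ∀ j, (A j).mulVec (w.1 j) + y j • B j ∈ K j}) :
    convexHull ℝ S = Shat := by
  subst hS hShat
  have hG_cube : ∀ w ∈ G, ∀ i, w.2 i = 0 ∨ w.2 i = 1 := fun w hw ↦ (hG ▸ hw).1
  have hG_nonneg : ∀ w ∈ G, 0 ≤ w.1 := by
    subst hG
    exact fun w hw j ↦ (hf j w.2 hw.1).trans (hw.2 j)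
  let C (j : Fin p) : PointedCone ℝ ((Fin m → ℝ) × ℝ) :=
    (ConvexCone.toPointedCone ⟨K j, fun c hc ↦ hKsmul j c hc.le, fun a ha ↦ hKadd j a ha⟩
      (hK0 j)).comap ((A j).mulVecLin.coprod (LinearMap.toSpanSingleton ℝ _ (B j)))
  convert conv_S_eq_Shat_general C hG_nonneg using 2 <;> ext w
  · subst hG
    exact ⟨fun ⟨hz, y, hy⟩ ↦ ⟨y, ⟨hz, fun j ↦ (hy j).1⟩, fun j ↦ (hy j).2⟩,
      fun ⟨y, ⟨hz, hfy⟩, hK⟩ ↦ ⟨hz, y, fun j ↦ ⟨hfy j, hK j⟩⟩⟩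
  · exact ⟨And.right, fun ⟨y, hy, hK⟩ ↦ ⟨snd_mem_Icc_of_mem_convexHull hG_cube hy, y, hy, hK⟩⟩
end

section
/- For each j ∈ [p], let f_j : {0,1}^n → ℝ_+ be a nonnegative function and K_j ⊆ ℝ^{q_j} a convex cone containing the origin. Define S̄({f_j},{K_j}) := {(x,z) ∈ ℝ^{mp} × {0,1}^n : A^j x^j + B^j f_j(z) ∈ K_j for all j ∈ [p]}. Then conv(S̄({f_j},{K_j})) ⊆ Ŝ({f_j},{K_j}), and if moreover S̄({f_j},{K_j}) = S({f_j},{K_j}), then conv(S̄({f_j},{K_j})) = Ŝ({f_j},{K_j}). -/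
/-!
Every convex combination `(y, z) = ∑ k, w k • (y k, z k)` of points of `G` lifts to a convex
combination of points of `S`: give the `k`-th point the blocks `(y k j / y j) • x j`. These stay
feasible because the constraint on a block and its bound is a cone condition, and they average to
`x j`. If `y j = 0`, nonnegativity forces `y k j = 0` for every `k`, and the block `x j` itself can
be used. Hence `conv S = Ŝ`, and the statements on `S̄ ⊆ S` follow by monotonicity.
-/

theorem mem_convexHull_inter_of_forall_eq_zero {𝕜 ι E : Type*} [Semiring 𝕜] [PartialOrder 𝕜]
    [IsStrictOrderedRing 𝕜] [NoZeroDivisors 𝕜] [AddCommMonoid E] [Module 𝕜 E]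
    {s : Set E} {L : ι → E →ₗ[𝕜] 𝕜} (hL : ∀ i, ∀ q ∈ s, 0 ≤ L i q) {p : E}
    (hp : p ∈ convexHull 𝕜 s) (hp0 : ∀ i, L i p = 0) :
    p ∈ convexHull 𝕜 (s ∩ {q | ∀ i, L i q = 0}) := by
  let F : Set E := {q | (∀ i, 0 ≤ L i q) ∧
    ((∀ i, L i q = 0) → q ∈ convexHull 𝕜 (s ∩ {q | ∀ i, L i q = 0}))}
  have hsF : s ⊆ F := fun q hq ↦
    ⟨fun i ↦ hL i q hq, fun hq0 ↦ subset_convexHull 𝕜 _ ⟨hq, hq0⟩⟩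
  have hF : Convex 𝕜 F := by
    refine convex_iff_forall_pos.2 fun q hq r hr a b ha hb hab ↦ ?_
    have hqa i : 0 ≤ a * L i q := mul_nonneg ha.le (hq.1 i)
    have hrb i : 0 ≤ b * L i r := mul_nonneg hb.le (hr.1 i)
    have hLadd i : L i (a • q + b • r) = a * L i q + b * L i r := by simp
    refine ⟨fun i ↦ (hLadd i).symm ▸ add_nonneg (hqa i) (hrb i), fun h0 ↦ ?_⟩
    have hzero i : a * L i q = 0 ∧ b * L i r = 0 :=
      (add_eq_zero_iff_of_nonneg (hqa i) (hrb i)).1 ((hLadd i).symm.trans (h0 i))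
    exact convex_convexHull 𝕜 _
      (hq.2 fun i ↦ (mul_eq_zero.1 (hzero i).1).resolve_left ha.ne')
      (hr.2 fun i ↦ (mul_eq_zero.1 (hzero i).2).resolve_left hb.ne') ha.le hb.le hab
  exact (convexHull_min hsF hF hp).2 hp0

section Rescale

variable {𝕜 E : Type*} [Field 𝕜] [AddCommGroup E] [Module 𝕜 E]

section Affine

variable [DecidableEq 𝕜]

/-- The affine map `s ↦ (s / t) • x`, which rescales a block `x` with bound `t` to the bound `s`.
For `t = 0` it is constantly `x`, so that `t` is sent to `x` in every case. -/
def rescale (x : E) (t : 𝕜) : 𝕜 →ᵃ[𝕜] E :=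
  if t = 0 then AffineMap.const 𝕜 𝕜 x
  else (LinearMap.toSpanSingleton 𝕜 E (t⁻¹ • x)).toAffineMap

theorem rescale_zero_right (x : E) (s : 𝕜) : rescale x 0 s = x := by
  simp [rescale]

theorem rescale_of_ne_zero (x : E) {t : 𝕜} (ht : t ≠ 0) (s : 𝕜) :
    rescale x t s = (s / t) • x := by
  simp [rescale, ht, smul_smul, div_eq_mul_inv]

theorem rescale_self (x : E) (t : 𝕜) : rescale x t t = x := by
  rcases eq_or_ne t 0 with rfl | ht
  · exact rescale_zero_right x 0
  · rw [rescale_of_ne_zero x ht, div_self ht, one_smul]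

end Affine

theorem rescale_mem_cone [LinearOrder 𝕜] [IsStrictOrderedRing 𝕜] {C : PointedCone 𝕜 (E × 𝕜)}
    {x : E} {s t : 𝕜} (hx : (x, t) ∈ C) (ht : 0 ≤ t) (hs : 0 ≤ s) (hst : t = 0 → s = 0) :
    (rescale x t s, s) ∈ C := by
  rcases eq_or_ne t 0 with rfl | ht0
  · rwa [hst rfl, rescale_zero_right]
  · have hscaled : (s / t) • (x, t) ∈ C := C.smul_mem (div_nonneg hs ht) hx
    rwa [Prod.smul_mk, smul_eq_mul, div_mul_cancel₀ s ht0, ← rescale_of_ne_zero x ht0] at hscaled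

end Rescale

section JointEpigraph

variable {𝕜 ι V : Type*} [Preorder 𝕜]

/-- The set `G({f_j})`, the epigraphs over `Z` of all the `f j` with a common argument `z`. -/
def jointEpigraph (Z : Set V) (f : ι → V → 𝕜) : Set ((ι → 𝕜) × V) :=
  {q | q.2 ∈ Z ∧ ∀ j, f j q.2 ≤ q.1 j}

theorem nonneg_of_mem_jointEpigraph [Zero 𝕜] {Z : Set V} {f : ι → V → 𝕜}
    (hf : ∀ j, ∀ z ∈ Z, 0 ≤ f j z) {q : (ι → 𝕜) × V} (hq : q ∈ jointEpigraph Z f) : 0 ≤ q.1 :=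
  fun j ↦ (hf j q.2 hq.1).trans (hq.2 j)

end JointEpigraph

section ConicRelaxation

variable {𝕜 ι V : Type*} {X : ι → Type*} [Field 𝕜] [LinearOrder 𝕜] [IsStrictOrderedRing 𝕜]
  [∀ j, AddCommGroup (X j)] [∀ j, Module 𝕜 (X j)]

/-- The cone of pairs `(x, t)` satisfying the conic constraint `A x + t B ∈ K`. -/
def constraintCone {E W : Type*} [AddCommGroup E] [Module 𝕜 E] [AddCommGroup W] [Module 𝕜 W]
    (K : PointedCone 𝕜 W) (A : E →ₗ[𝕜] W) (B : W) : PointedCone 𝕜 (E × 𝕜) :=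
  K.comap (A.coprod (LinearMap.toSpanSingleton 𝕜 W B))

/-- The set `S̄({f_j},{K_j})`, where `C j` stands for the `constraintCone` of `K_j`, `A^j`
and `B^j`: only this cone of feasible pairs `(x^j, y_j)` matters. -/
def tightConicSet (Z : Set V) (f : ι → V → 𝕜) (C : ∀ j, PointedCone 𝕜 (X j × 𝕜)) :
    Set ((∀ j, X j) × V) :=
  {w | w.2 ∈ Z ∧ ∀ j, (w.1 j, f j w.2) ∈ C j}

/-- The set `S({f_j},{K_j})`, with cones `C j` as in `tightConicSet`. -/
def conicSet (Z : Set V) (f : ι → V → 𝕜) (C : ∀ j, PointedCone 𝕜 (X j × 𝕜)) :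
    Set ((∀ j, X j) × V) :=
  {w | w.2 ∈ Z ∧ ∃ y : ι → 𝕜, ∀ j, f j w.2 ≤ y j ∧ (w.1 j, y j) ∈ C j}

variable {Z : Set V} {f : ι → V → 𝕜} {C : ∀ j, PointedCone 𝕜 (X j × 𝕜)}

theorem tightConicSet_subset_conicSet : tightConicSet Z f C ⊆ conicSet Z f C :=
  fun w hw ↦ ⟨hw.1, fun j ↦ f j w.2, fun j ↦ ⟨le_rfl, hw.2 j⟩⟩

variable [AddCommGroup V] [Module 𝕜 V]

/-- The set `Ŝ({f_j},{K_j})`, with cones `C j` as in `tightConicSet`. The set `D` stands for the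
cube `[0,1]^n` when `Z` is `{0,1}^n`. -/
def conicRelaxation (D Z : Set V) (f : ι → V → 𝕜) (C : ∀ j, PointedCone 𝕜 (X j × 𝕜)) :
    Set ((∀ j, X j) × V) :=
  {w | w.2 ∈ D ∧ ∃ y : ι → 𝕜, (y, w.2) ∈ convexHull 𝕜 (jointEpigraph Z f) ∧
    ∀ j, (w.1 j, y j) ∈ C j}

variable {D : Set V}

theorem conicSet_subset_conicRelaxation (hZD : Z ⊆ D) :
    conicSet Z f C ⊆ conicRelaxation D Z f C := by
  rintro w ⟨hz, y, hy⟩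
  exact ⟨hZD hz, y, subset_convexHull 𝕜 _ ⟨hz, fun j ↦ (hy j).1⟩, fun j ↦ (hy j).2⟩

theorem convex_conicRelaxation (hD : Convex 𝕜 D) : Convex 𝕜 (conicRelaxation D Z f C) := by
  rintro w ⟨hwD, y, hy, hwC⟩ w' ⟨hwD', y', hy', hwC'⟩ a b ha hb hab
  exact ⟨hD hwD hwD' ha hb hab, a • y + b • y', convex_convexHull 𝕜 _ hy hy' ha hb hab,
    fun j ↦ (C j).convex (hwC j) (hwC' j) ha hb hab⟩

theorem nonneg_of_mem_convexHull_jointEpigraph (hf : ∀ j, ∀ z ∈ Z, 0 ≤ f j z)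
    {q : (ι → 𝕜) × V} (hq : q ∈ convexHull 𝕜 (jointEpigraph Z f)) : 0 ≤ q.1 :=
  convexHull_min (t := LinearMap.fst 𝕜 (ι → 𝕜) V ⁻¹' Set.Ici 0)
    (fun q hq ↦ nonneg_of_mem_jointEpigraph (q := q) hf hq) ((convex_Ici 0).linear_preimage _) hq

theorem mem_convexHull_jointEpigraph_inter (hf : ∀ j, ∀ z ∈ Z, 0 ≤ f j z)
    {q : (ι → 𝕜) × V} (hq : q ∈ convexHull 𝕜 (jointEpigraph Z f)) :
    q ∈ convexHull 𝕜 (jointEpigraph Z f ∩ {r | ∀ j, q.1 j = 0 → r.1 j = 0}) := by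
  let L (j : {j // q.1 j = 0}) : (ι → 𝕜) × V →ₗ[𝕜] 𝕜 :=
    LinearMap.proj j.1 ∘ₗ LinearMap.fst 𝕜 (ι → 𝕜) V
  have hL : ∀ j, ∀ r ∈ jointEpigraph Z f, 0 ≤ L j r :=
    fun j r hr ↦ nonneg_of_mem_jointEpigraph hf hr j
  have hface := mem_convexHull_inter_of_forall_eq_zero hL hq fun j ↦ j.2
  refine convexHull_mono ?_ hface
  rintro r ⟨hr, hr0⟩
  exact ⟨hr, fun j hj ↦ hr0 ⟨j, hj⟩⟩

theorem conicRelaxation_subset_convexHull_conicSet (hf : ∀ j, ∀ z ∈ Z, 0 ≤ f j z) :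
    conicRelaxation D Z f C ⊆ convexHull 𝕜 (conicSet Z f C) := by
  rintro ⟨x, z⟩ ⟨-, y, hy, hxC⟩
  let φ : (ι → 𝕜) × V →ᵃ[𝕜] (∀ j, X j) × V :=
    (AffineMap.pi fun j ↦
      (rescale (x j) (y j)).comp (AffineMap.proj j)).prodMap (AffineMap.id 𝕜 V)
  have hφ : φ (y, z) = (x, z) := Prod.ext (funext fun j ↦ rescale_self (x j) (y j)) rfl
  have hmaps : φ '' (jointEpigraph Z f ∩ {r | ∀ j, y j = 0 → r.1 j = 0}) ⊆ conicSet Z f C := by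
    rintro _ ⟨r, ⟨hr, hr0⟩, rfl⟩
    exact ⟨hr.1, r.1, fun j ↦ ⟨hr.2 j, rescale_mem_cone (hxC j)
      (nonneg_of_mem_convexHull_jointEpigraph hf hy j) (nonneg_of_mem_jointEpigraph hf hr j)
      (hr0 j)⟩⟩
  refine convexHull_mono hmaps ?_
  rw [← AffineMap.image_convexHull, ← hφ]
  exact Set.mem_image_of_mem φ (mem_convexHull_jointEpigraph_inter hf hy)

theorem convexHull_conicSet_eq_conicRelaxation (hD : Convex 𝕜 D) (hZD : Z ⊆ D)
    (hf : ∀ j, ∀ z ∈ Z, 0 ≤ f j z) :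
    convexHull 𝕜 (conicSet Z f C) = conicRelaxation D Z f C :=
  (convexHull_min (conicSet_subset_conicRelaxation hZD) (convex_conicRelaxation hD)).antisymm
    (conicRelaxation_subset_convexHull_conicSet hf)

theorem conv_Sbar_multi_subset_Shat_general (hD : Convex 𝕜 D) (hZD : Z ⊆ D)
    (hf : ∀ j, ∀ z ∈ Z, 0 ≤ f j z) :
    convexHull 𝕜 (tightConicSet Z f C) ⊆ conicRelaxation D Z f C ∧
      (tightConicSet Z f C = conicSet Z f C →
        convexHull 𝕜 (tightConicSet Z f C) = conicRelaxation D Z f C) := by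
  have hS := convexHull_conicSet_eq_conicRelaxation (C := C) hD hZD hf
  exact ⟨(convexHull_mono tightConicSet_subset_conicSet).trans_eq hS, fun h ↦ h ▸ hS⟩

end ConicRelaxation

section Icc

variable {𝕜 : Type*} [Semiring 𝕜] [PartialOrder 𝕜] [IsOrderedRing 𝕜]

theorem setOf_forall_eq_zero_or_one_subset_Icc (κ : Type*) :
    {z : κ → 𝕜 | ∀ i, z i = 0 ∨ z i = 1} ⊆ {z | ∀ i, z i ∈ Set.Icc 0 1} :=
  fun z hz i ↦ (hz i).elim (fun h ↦ by simp [h]) (fun h ↦ by simp [h])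

theorem convex_setOf_forall_mem_Icc (κ : Type*) (l u : 𝕜) :
    Convex 𝕜 {z : κ → 𝕜 | ∀ i, z i ∈ Set.Icc l u} :=
  fun _ hz _ hz' _ _ ha hb hab i ↦ convex_Icc l u (hz i) (hz' i) ha hb hab

end Icc

/-- Corollary 2: for nonnegative functions `f_j` and convex cones `K_j` containing the
origin, `conv(S̄({f_j},{K_j})) ⊆ Ŝ({f_j},{K_j})`, with equality whenever
`S̄({f_j},{K_j}) = S({f_j},{K_j})`. -/
theorem conv_Sbar_multi_subset_Shat (p n m : ℕ) (q : Fin p → ℕ)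
    (f : Fin p → (Fin n → ℝ) → ℝ)
    (hf : ∀ j, ∀ z : Fin n → ℝ, (∀ i, z i = 0 ∨ z i = 1) → 0 ≤ f j z)
    (K : ∀ j, Set (Fin (q j) → ℝ))
    (hK0 : ∀ j, (0 : Fin (q j) → ℝ) ∈ K j)
    (hKadd : ∀ j, ∀ a ∈ K j, ∀ b ∈ K j, a + b ∈ K j)
    (hKsmul : ∀ j, ∀ c : ℝ, 0 ≤ c → ∀ a ∈ K j, c • a ∈ K j)
    (A : ∀ j, Matrix (Fin (q j)) (Fin m) ℝ) (B : ∀ j, Fin (q j) → ℝ)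
    (Sbar S Shat : Set ((Fin p → Fin m → ℝ) × (Fin n → ℝ)))
    (G : Set ((Fin p → ℝ) × (Fin n → ℝ)))
    (hSbar : Sbar = {w | (∀ i, w.2 i = 0 ∨ w.2 i = 1) ∧
      ∀ j, (A j).mulVec (w.1 j) + f j w.2 • B j ∈ K j})
    (hS : S = {w | (∀ i, w.2 i = 0 ∨ w.2 i = 1) ∧ ∃ y : Fin p → ℝ,
      ∀ j, f j w.2 ≤ y j ∧ (A j).mulVec (w.1 j) + y j • B j ∈ K j})
    (hG : G = {yz | (∀ i, yz.2 i = 0 ∨ yz.2 i = 1) ∧ ∀ j, f j yz.2 ≤ yz.1 j})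
    (hShat : Shat = {w | (∀ i, w.2 i ∈ Set.Icc (0:ℝ) 1) ∧ ∃ y : Fin p → ℝ,
      (y, w.2) ∈ convexHull ℝ G ∧
      ∀ j, (A j).mulVec (w.1 j) + y j • B j ∈ K j}) :
    convexHull ℝ Sbar ⊆ Shat ∧ (Sbar = S → convexHull ℝ Sbar = Shat) := by
  subst hSbar hS hG hShat
  exact conv_Sbar_multi_subset_Shat_general
    (C := fun j ↦ constraintCone
      (.ofConeComb (K j) ⟨0, hK0 j⟩ fun u hu v hv a ha b hb ↦
        hKadd j _ (hKsmul j a ha u hu) _ (hKsmul j b hb v hv))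
      (A j).mulVecLin (B j))
    (convex_setOf_forall_mem_Icc (Fin n) 0 1)
    (setOf_forall_eq_zero_or_one_subset_Icc (Fin n)) hf
end

section
/- Let f : {0,1}^n → ℝ be submodular, i.e., f(S₁) + f(S₂) ≥ f(S₁∪S₂) + f(S₁∩S₂) for all S₁, S₂ ⊆ [n] (identifying subsets with their characteristic vectors). Then conv(Epi(f)) = {(y,z) ∈ ℝ × [0,1]^n : y − f(∅) ≥ π^⊤ z for all π ∈ P_{f̃}}, where f̃ := f − f(∅) and P_{f̃} := {π ∈ ℝ^n : Σ_{i∈V} π_i ≤ f(V) − f(∅) for all V ⊆ [n]}. -/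
/-!
Every `π` in the extended polymatroid of `f - f ∅` gives an inequality valid on the epigraph, hence
on its convex hull. Conversely, a point `z` of the cube is a convex combination of the indicators of
its superlevel sets `{i | t ≤ z i}`. By submodularity, the greedy vector `π` for the order induced
by `z` lies in the extended polymatroid and its inequality is tight at all these sets.
Hence `(f ∅ + π ⬝ᵥ z, z)` is a convex combination of points of the epigraph, and so is `(y, z)` for
every larger `y`.
-/

open Finset
open scoped Pointwise

/-- Submodularity of a function on a lattice; for `α = Finset ι` this is the usual notion for set
functions. -/
def Submodular {α β : Type*} [Lattice α] [Add β] [LE β] (f : α → β) : Prop :=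
  ∀ a b, f (a ⊔ b) + f (a ⊓ b) ≤ f a + f b

/-- The extended polymatroid `P_g` of a set function `g`. The word "extended" means that, unlike in
the polymatroid of `g`, the vectors may have negative entries. -/
def extendedPolymatroid {ι G : Type*} [AddCommMonoid G] [LE G] (g : Finset ι → G) :
    Set (ι → G) :=
  {π | ∀ V : Finset ι, ∑ i ∈ V, π i ≤ g V}

section Greedy

variable {ι G : Type*} [DecidableEq ι] [AddCommGroup G] [PartialOrder G] [IsOrderedAddMonoid G]
  {f : Finset ι → G}

theorem Submodular.sub_const {α : Type*} [Lattice α] {g : α → G} (hg : Submodular g) (c : G) :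
    Submodular fun a ↦ g a - c :=
  fun a b ↦ by simpa only [sub_add_sub_comm] using sub_le_sub_right (hg a b) (c + c)

theorem Submodular.erase_add_insert_sub_le (hf : Submodular f) {a : ι} {s V : Finset ι}
    (has : a ∉ s) (haV : a ∈ V) (hV : V ⊆ insert a s) :
    f (V.erase a) + (f (insert a s) - f s) ≤ f V := by
  have hunion : V ⊔ s = insert a s := by grind
  have hinter : V ⊓ s = V.erase a := by grind
  have hsub := hf V s
  rw [hunion, hinter, add_comm] at hsub
  rwa [← add_sub_assoc, sub_le_iff_le_add]

/-- Edmonds' greedy algorithm: adding the elements in order of decreasing `z`, each coordinate of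
`π` is the marginal increase of `f`. -/
theorem Submodular.exists_sum_le_and_sum_filter_eq {α : Type*} [LinearOrder α]
    (hf : Submodular f) (h₀ : f ∅ = 0) (z : ι → α) (s : Finset ι) :
    ∃ π : ι → G, (∀ V ⊆ s, ∑ i ∈ V, π i ≤ f V) ∧
      ∀ t, ∑ i ∈ s with t ≤ z i, π i = f {i ∈ s | t ≤ z i} := by
  induction s using Finset.induction_on_min_value z with
  | empty => exact ⟨0, by simp +contextual [h₀], by simp [h₀]⟩
  | insert a s ha hmin ih =>
    obtain ⟨π, hle, htight⟩ := ih
    refine ⟨Function.update π a (f (insert a s) - f s), fun V hV ↦ ?_, fun t ↦ ?_⟩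
    · by_cases haV : a ∈ V
      · rw [← sum_erase_add _ _ haV, sum_update_of_notMem (notMem_erase a V), Function.update_self]
        exact (add_le_add_left (hle _ (by grind)) _).trans (hf.erase_add_insert_sub_le ha haV hV)
      · rw [sum_update_of_notMem haV]
        exact hle V ((subset_insert_iff_of_notMem haV).1 hV)
    · by_cases hta : t ≤ z a
      · have hfilter : {i ∈ s | t ≤ z i} = s := filter_true_of_mem fun i hi ↦ hta.trans (hmin i hi)
        have hs := htight t
        rw [hfilter] at hs
        rw [filter_insert, if_pos hta, hfilter, sum_insert ha, sum_update_of_notMem ha,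
          Function.update_self, hs, sub_add_cancel]
      · rw [filter_insert, if_neg hta, sum_update_of_notMem (by simp [ha]), htight]

theorem Submodular.exists_mem_extendedPolymatroid_sum_filter_eq {α : Type*} [LinearOrder α]
    [Fintype ι] (hf : Submodular f) (h₀ : f ∅ = 0) (z : ι → α) :
    ∃ π ∈ extendedPolymatroid f, ∀ t, ∑ i with t ≤ z i, π i = f {i | t ≤ z i} := by
  obtain ⟨π, hle, htight⟩ := hf.exists_sum_le_and_sum_filter_eq h₀ z univ
  exact ⟨π, fun V ↦ hle V (subset_univ V), htight⟩

end Greedy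

/-- The characteristic vector of `V`, identifying the subsets of `ι` with the binary points. -/
def charVec {ι : Type*} (R : Type*) [DecidableEq ι] [Zero R] [One R] (V : Finset ι) : ι → R :=
  fun i ↦ if i ∈ V then 1 else 0

/-- `Epi(f)`, the epigraph of a set function `f` over the binary points. -/
def binaryEpigraph {ι R : Type*} [DecidableEq ι] [Zero R] [One R] [LE R] (f : Finset ι → R) :
    Set (R × (ι → R)) :=
  {yz | ∃ V : Finset ι, (∀ i, yz.2 i = charVec R V i) ∧ f V ≤ yz.1}

theorem dotProduct_charVec {ι R : Type*} [Fintype ι] [DecidableEq ι] [NonAssocSemiring R]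
    (π : ι → R) (V : Finset ι) : π ⬝ᵥ charVec R V = ∑ i ∈ V, π i := by
  simp [dotProduct, charVec]

section Hull

variable {ι 𝕜 : Type*} [DecidableEq ι] [Field 𝕜] [LinearOrder 𝕜] [IsStrictOrderedRing 𝕜]

/-- The layer-cake formula `(z - m)⁺ = ∫ t in m..b, 𝟙{t ≤ z}`, whose integrand takes finitely many
values. -/
theorem max_sub_zero_mem_smul_convexHull [Fintype ι] {z : ι → 𝕜} {b m : 𝕜}
    (hz : ∀ i, z i ≤ b) :
    (fun i ↦ max (z i - m) 0) ∈
      (b - m) • convexHull 𝕜 (Set.range fun t : 𝕜 ↦ charVec 𝕜 {i | t ≤ z i}) := by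
  induction hN : #{i | m < z i} using Nat.strong_induction_on generalizing m with
  | _ N ih =>
  have layer_mem (t : 𝕜) := subset_convexHull 𝕜 _
    (Set.mem_range_self (f := fun t : 𝕜 ↦ charVec 𝕜 {i | t ≤ z i}) t)
  obtain hempty | hne := ({i | m < z i} : Finset ι).eq_empty_or_nonempty
  · refine ⟨_, layer_mem (b + 1), funext fun i ↦ ?_⟩
    have him : z i ≤ m := not_lt.1 (filter_eq_empty_iff.1 hempty (mem_univ i))
    have hib : ¬ b + 1 ≤ z i := by linarith [hz i]
    simp [charVec, him, hib]
  · obtain ⟨j, hj, hmin⟩ := exists_min_image _ z hne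
    simp only [mem_filter_univ] at hj hmin
    have hcard : #{i | z j < z i} < N := by
      have hsub : univ.filter (z j < z ·) ⊆ univ.filter (m < z ·) :=
        monotone_filter_right _ fun _ _ hi ↦ hj.trans hi
      rw [← hN]
      exact card_lt_card ((ssubset_iff_of_subset hsub).2 ⟨j, by simpa using hj, by simp⟩)
    have hsplit : (fun i ↦ max (z i - m) 0) =
        (z j - m) • charVec 𝕜 {i | z j ≤ z i} + fun i ↦ max (z i - z j) 0 := by
      ext i
      by_cases hi : m < z i
      · have hji := hmin i hi
        simp [charVec, hji, hi.le]
      · have hij : z i < z j := (not_lt.1 hi).trans_lt hj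
        simp [charVec, hij.not_ge, hij.le, not_lt.1 hi]
    rw [hsplit, ← sub_add_sub_cancel' (z j) m b,
      (convex_convexHull 𝕜 _).add_smul (sub_nonneg.2 hj.le) (sub_nonneg.2 (hz j))]
    exact Set.add_mem_add (Set.smul_mem_smul_set (layer_mem (z j))) (ih _ hcard rfl)

theorem mem_convexHull_range_charVec_filter_le [Fintype ι] {z : ι → 𝕜}
    (hz : ∀ i, z i ∈ Set.Icc 0 1) :
    z ∈ convexHull 𝕜 (Set.range fun t : 𝕜 ↦ charVec 𝕜 {i | t ≤ z i}) := by
  have hmem := max_sub_zero_mem_smul_convexHull (m := 0) fun i ↦ (hz i).2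
  simpa [max_eq_left (hz _).1] using hmem

theorem mem_Icc_of_mem_convexHull_binaryEpigraph {f : Finset ι → 𝕜} {yz : 𝕜 × (ι → 𝕜)}
    (hyz : yz ∈ convexHull 𝕜 (binaryEpigraph f)) (i : ι) : yz.2 i ∈ Set.Icc 0 1 := by
  let coord : 𝕜 × (ι → 𝕜) →ₗ[𝕜] 𝕜 := LinearMap.proj i ∘ₗ LinearMap.snd 𝕜 𝕜 (ι → 𝕜)
  refine convexHull_min ?_ ((convex_Icc (0 : 𝕜) 1).linear_preimage coord) hyz
  rintro ⟨y, z⟩ ⟨V, hz, -⟩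
  obtain rfl : z = charVec 𝕜 V := funext hz
  by_cases hi : i ∈ V <;> simp [coord, charVec, hi]

theorem dotProduct_le_of_mem_convexHull_binaryEpigraph [Fintype ι] {f : Finset ι → 𝕜} {c : 𝕜}
    {π : ι → 𝕜} (hπ : π ∈ extendedPolymatroid fun V ↦ f V - c) {yz : 𝕜 × (ι → 𝕜)}
    (hyz : yz ∈ convexHull 𝕜 (binaryEpigraph f)) : π ⬝ᵥ yz.2 ≤ yz.1 - c := by
  let gap : 𝕜 × (ι → 𝕜) →ₗ[𝕜] 𝕜 :=
    LinearMap.fst 𝕜 𝕜 (ι → 𝕜) - dotProductBilin 𝕜 𝕜 π ∘ₗ LinearMap.snd 𝕜 𝕜 (ι → 𝕜)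
  suffices hgap : c ≤ gap yz from le_sub_comm.1 hgap
  refine convexHull_min ?_ ((convex_Ici c).linear_preimage gap) hyz
  rintro ⟨y, z⟩ ⟨V, hz, hy⟩
  obtain rfl : z = charVec 𝕜 V := funext hz
  change c ≤ y - π ⬝ᵥ charVec 𝕜 V
  rw [dotProduct_charVec, le_sub_comm]
  exact (hπ V).trans (sub_le_sub_right hy c)

theorem mk_mem_convexHull_binaryEpigraph [Fintype ι] {f : Finset ι → 𝕜} {C : Set (Finset ι)}
    {π z : ι → 𝕜} {c y : 𝕜} (hπ : ∀ V ∈ C, ∑ i ∈ V, π i = f V - c)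
    (hz : z ∈ convexHull 𝕜 (charVec 𝕜 '' C)) (hy : π ⬝ᵥ z ≤ y - c) :
    (y, z) ∈ convexHull 𝕜 (binaryEpigraph f) := by
  let lift : (ι → 𝕜) →ᵃ[𝕜] 𝕜 × (ι → 𝕜) :=
    ((dotProductBilin 𝕜 𝕜 π).prod LinearMap.id).toAffineMap +
      AffineMap.const 𝕜 (ι → 𝕜) (y - π ⬝ᵥ z, 0)
  have lift_apply (x : ι → 𝕜) : lift x = (π ⬝ᵥ x + (y - π ⬝ᵥ z), x) := by simp [lift]
  have hlift : Set.MapsTo lift (charVec 𝕜 '' C) (binaryEpigraph f) := by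
    rintro _ ⟨V, hV, rfl⟩
    refine ⟨V, fun i ↦ by rw [lift_apply], ?_⟩
    rw [lift_apply, dotProduct_charVec, hπ V hV]
    linarith
  have hmem : lift z ∈ convexHull 𝕜 (binaryEpigraph f) :=
    convexHull_min (hlift.mono_right (subset_convexHull 𝕜 _))
      ((convex_convexHull 𝕜 _).affine_preimage lift) hz
  rwa [lift_apply, add_sub_cancel] at hmem

theorem conv_epi_submodular_general [Fintype ι] {f : Finset ι → 𝕜} (hf : Submodular f) :
    convexHull 𝕜 (binaryEpigraph f) =
      {yz | (∀ i, yz.2 i ∈ Set.Icc 0 1) ∧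
        ∀ π ∈ extendedPolymatroid fun V ↦ f V - f ∅, π ⬝ᵥ yz.2 ≤ yz.1 - f ∅} := by
  refine Set.Subset.antisymm (fun yz hyz ↦ ⟨mem_Icc_of_mem_convexHull_binaryEpigraph hyz,
    fun π hπ ↦ dotProduct_le_of_mem_convexHull_binaryEpigraph hπ hyz⟩) ?_
  rintro ⟨y, z⟩ ⟨hz, hy⟩
  obtain ⟨π, hπ, htight⟩ :=
    (hf.sub_const (f ∅)).exists_mem_extendedPolymatroid_sum_filter_eq (sub_self _) z
  refine mk_mem_convexHull_binaryEpigraph (Set.forall_mem_range.2 htight) ?_ (hy π hπ)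
  rw [← Set.range_comp]
  exact mem_convexHull_range_charVec_filter_le hz

end Hull

/-- Theorem (Lovász; Atamtürk–Narayanan): for a submodular `f : {0,1}^n → ℝ`,
`conv(Epi(f)) = {(y,z) ∈ ℝ × [0,1]^n : y − f(∅) ≥ π᷀ᵀ z for all π ∈ P_{f̃}}`,
where `f̃ = f − f(∅)`. Binary vectors are identified with subsets of `[n]`. -/
theorem conv_epi_submodular (n : ℕ) (f : Finset (Fin n) → ℝ)
    (hsub : ∀ S₁ S₂ : Finset (Fin n), f (S₁ ∪ S₂) + f (S₁ ∩ S₂) ≤ f S₁ + f S₂) :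
    convexHull ℝ {yz : ℝ × (Fin n → ℝ) |
      ∃ V : Finset (Fin n), (∀ i, yz.2 i = if i ∈ V then (1:ℝ) else 0) ∧ f V ≤ yz.1}
    = {yz : ℝ × (Fin n → ℝ) | (∀ i, yz.2 i ∈ Set.Icc (0:ℝ) 1) ∧
        ∀ π : Fin n → ℝ, (∀ V : Finset (Fin n), ∑ i ∈ V, π i ≤ f V - f ∅) →
          ∑ i, π i * yz.2 i ≤ yz.1 - f ∅} :=
  conv_epi_submodular_general hsub
end

section
/- Let σ ∈ ℝ, c ∈ ℝ^n, d ∈ ℝ^{m−2}_+ with σ + Σ_{i∈[n]} c_i z_i ≥ 0 for all z ∈ {0,1}^n, and define f(z) := √(σ + Σ_{i∈[n]} c_i z_i) and R := {(x,z) ∈ ℝ^m_+ × {0,1}^n : σ + Σ_{i∈[n]} c_i z_i + Σ_{j∈[m−2]} d_j x_j² ≤ 4 x_{m−1} x_m}. Then conv(R) = {(x,z) ∈ ℝ^m_+ × [0,1]^n : ∃ y ∈ ℝ_+ such that (y,z) ∈ conv(Epi(f)) and y² + Σ_{i∈[m−2]} d_i x_i² ≤ 4 x_{m−1} x_m}.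 -/
/-!
Write `K` for the cone of pairs `(y, x)` with `x, y ≥ 0` and `y² + ∑ dⱼ xⱼ² ≤ 4 xₘ₋₁ xₘ`. Then `R`
is the projection to `(x, z)` of the fibre product over `y` of `K` and the epigraph of `f`, and the
claim is that convexifying this fibre product amounts to convexifying the epigraph alone. The point
is that a convex combination of values of `y` lifts along `K`: if `y = s y₁ + t y₂ > 0` and
`(y, x) ∈ K`, then `x` is the combination of the points `(y₁ / y) x` and `(y₂ / y) x`, which lie
over `y₁` and `y₂` because `K` is a cone; if `y = 0`, then `y₁ = y₂ = 0` and `x` itself works.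
-/

section FiberProduct

variable {E F : Type*} [AddCommGroup E] [Module ℝ E] [AddCommGroup F] [Module ℝ F]

lemma exists_mem_fiber_of_convex_combo_mem (K : PointedCone ℝ (ℝ × E)) {y₁ y₂ s t : ℝ} {x : E}
    (hy₁ : 0 ≤ y₁) (hy₂ : 0 ≤ y₂) (hs : 0 < s) (ht : 0 < t) (hst : s + t = 1)
    (hx : (s * y₁ + t * y₂, x) ∈ K) :
    ∃ x₁ x₂, (y₁, x₁) ∈ K ∧ (y₂, x₂) ∈ K ∧ s • x₁ + t • x₂ = x := by
  have hsy₁ : 0 ≤ s * y₁ := mul_nonneg hs.le hy₁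
  have hty₂ : 0 ≤ t * y₂ := mul_nonneg ht.le hy₂
  rcases (add_nonneg hsy₁ hty₂).eq_or_lt with hy | hy
  · obtain ⟨h₁, h₂⟩ := (add_eq_zero_iff_of_nonneg hsy₁ hty₂).1 hy.symm
    obtain rfl : y₁ = 0 := (mul_eq_zero.1 h₁).resolve_left hs.ne'
    obtain rfl : y₂ = 0 := (mul_eq_zero.1 h₂).resolve_left ht.ne'
    have hx₀ : ((0 : ℝ), x) ∈ K := by simpa only [mul_zero, add_zero] using hx
    exact ⟨x, x, hx₀, hx₀, Convex.combo_self hst x⟩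
  · set y := s * y₁ + t * y₂ with hy_def
    have scaled_mem {v : ℝ} (hv : 0 ≤ v) : (v, (v / y) • x) ∈ K := by
      have h := K.smul_mem (div_nonneg hv hy.le) hx
      rwa [Prod.smul_mk, smul_eq_mul, div_mul_cancel₀ v hy.ne'] at h
    refine ⟨_, _, scaled_mem hy₁, scaled_mem hy₂, ?_⟩
    rw [smul_smul, smul_smul, ← add_smul, mul_div_assoc', mul_div_assoc', ← add_div, ← hy_def,
      div_self hy.ne', one_smul]

lemma convex_setOf_fiber_subset (K : PointedCone ℝ (ℝ × E)) {C : Set (E × F)} (hC : Convex ℝ C) :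
    Convex ℝ {p : ℝ × F | 0 ≤ p.1 ∧ ∀ x, (p.1, x) ∈ K → (x, p.2) ∈ C} := by
  rw [convex_iff_forall_pos]
  rintro ⟨y₁, z₁⟩ ⟨hy₁, hC₁⟩ ⟨y₂, z₂⟩ ⟨hy₂, hC₂⟩ s t hs ht hst
  refine ⟨add_nonneg (mul_nonneg hs.le hy₁) (mul_nonneg ht.le hy₂), fun x hx ↦ ?_⟩
  obtain ⟨x₁, x₂, hx₁, hx₂, rfl⟩ := exists_mem_fiber_of_convex_combo_mem K hy₁ hy₂ hs ht hst hx
  exact hC (hC₁ x₁ hx₁) (hC₂ x₂ hx₂) hs.le ht.le hst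

/-- The fibre product of `K` and `D` over their common real coordinate, projected to `E × F`. -/
def fiberProduct (K : Set (ℝ × E)) (D : Set (ℝ × F)) : Set (E × F) :=
  {w | ∃ y, (y, w.1) ∈ K ∧ (y, w.2) ∈ D}

lemma convex_fiberProduct {K : Set (ℝ × E)} {D : Set (ℝ × F)} (hK : Convex ℝ K) (hD : Convex ℝ D) :
    Convex ℝ (fiberProduct K D) := by
  rintro w₁ ⟨y₁, hK₁, hD₁⟩ w₂ ⟨y₂, hK₂, hD₂⟩ s t hs ht hst
  exact ⟨s • y₁ + t • y₂, hK hK₁ hK₂ hs ht hst, hD hD₁ hD₂ hs ht hst⟩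

theorem convexHull_fiberProduct (K : PointedCone ℝ (ℝ × E)) {D : Set (ℝ × F)}
    (hD : ∀ p ∈ D, 0 ≤ p.1) :
    convexHull ℝ (fiberProduct K D) = fiberProduct (K : Set (ℝ × E)) (convexHull ℝ D) := by
  apply Set.Subset.antisymm
  · exact convexHull_min (fun _ ⟨y, hK, hy⟩ ↦ ⟨y, hK, subset_convexHull ℝ D hy⟩)
      (convex_fiberProduct K.toConvexCone.convex (convex_convexHull ℝ D))
  · rintro ⟨x, z⟩ ⟨y, hK, hy⟩
    have fibers_subset_hull : D ⊆
        {p | 0 ≤ p.1 ∧ ∀ x, (p.1, x) ∈ K → (x, p.2) ∈ convexHull ℝ (fiberProduct K D)} :=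
      fun p hp ↦ ⟨hD p hp, fun _ hx ↦ subset_convexHull ℝ _ ⟨p.1, hx, hp⟩⟩
    exact (convexHull_min fibers_subset_hull
      (convex_setOf_fiber_subset K (convex_convexHull ℝ _)) hy).2 x hK

end FiberProduct

section RotatedCone

variable {V : Type*} [AddCommGroup V] [Module ℝ V]

lemma polar_sq_le_four_mul {Q : QuadraticForm ℝ V} (hQ : ∀ v, 0 ≤ Q v) (u v : V) :
    QuadraticMap.polar Q u v ^ 2 ≤ 4 * Q u * Q v := by
  have polar_self (w : V) : Q.polarBilin w w = 2 * Q w := by simp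
  have cauchy_schwarz := LinearMap.BilinForm.apply_sq_le_of_symm Q.polarBilin
    (fun w ↦ by rw [polar_self]; exact mul_nonneg zero_le_two (hQ w))
    ⟨fun w w' ↦ QuadraticMap.polar_comm Q w w'⟩ u v
  rw [polar_self, polar_self] at cauchy_schwarz
  calc QuadraticMap.polar Q u v ^ 2 ≤ 2 * Q u * (2 * Q v) := cauchy_schwarz
    _ = 4 * Q u * Q v := by ring

lemma quadraticForm_add_le_four_mul {Q : QuadraticForm ℝ V} (hQ : ∀ v, 0 ≤ Q v) {u v : V}
    {a b a' b' : ℝ} (ha : 0 ≤ a) (hb : 0 ≤ b) (ha' : 0 ≤ a') (hb' : 0 ≤ b')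
    (hu : Q u ≤ 4 * a * b) (hv : Q v ≤ 4 * a' * b') :
    Q (u + v) ≤ 4 * (a + a') * (b + b') := by
  have polar_sq : QuadraticMap.polar Q u v ^ 2 ≤ (4 * (a * b' + a' * b)) ^ 2 :=
    calc QuadraticMap.polar Q u v ^ 2 ≤ 4 * Q u * Q v := polar_sq_le_four_mul hQ u v
      _ ≤ 4 * (4 * a * b) * (4 * a' * b') := by
        have := hQ u; have := hQ v
        gcongr
      _ ≤ (4 * (a * b' + a' * b)) ^ 2 := by nlinarith [sq_nonneg (a * b' - a' * b)]
  have polar_le : QuadraticMap.polar Q u v ≤ 4 * (a * b' + a' * b) :=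
    le_of_sq_le_sq polar_sq (by positivity)
  calc Q (u + v) = Q u + Q v + QuadraticMap.polar Q u v := QuadraticMap.map_add Q u v
    _ ≤ 4 * a * b + 4 * a' * b' + 4 * (a * b' + a' * b) := by gcongr
    _ = 4 * (a + a') * (b + b') := by ring

/-- The rotated quadratic cone `Q v ≤ 4 (a v) (b v)` inside a cone `P` on which the linear forms `a`
and `b` are nonnegative, for a positive semidefinite quadratic form `Q`. -/
def rotatedCone (P : PointedCone ℝ V) (Q : QuadraticForm ℝ V) (a b : V →ₗ[ℝ] ℝ)
    (hQ : ∀ v, 0 ≤ Q v) (ha : ∀ v ∈ P, 0 ≤ a v) (hb : ∀ v ∈ P, 0 ≤ b v) : PointedCone ℝ V where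
  carrier := {v | v ∈ P ∧ Q v ≤ 4 * a v * b v}
  zero_mem' := ⟨P.zero_mem, by simp⟩
  add_mem' := by
    rintro u v ⟨hu, hQu⟩ ⟨hv, hQv⟩
    refine ⟨P.add_mem hu hv, ?_⟩
    rw [map_add a, map_add b]
    exact quadraticForm_add_le_four_mul hQ (ha u hu) (hb u hu) (ha v hv) (hb v hv) hQu hQv
  smul_mem' := by
    rintro ⟨r, hr⟩ v ⟨hv, hQv⟩
    refine ⟨P.smul_mem hr hv, ?_⟩
    calc Q (r • v) = r * r * Q v := QuadraticMap.map_smul Q r v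
      _ ≤ r * r * (4 * a v * b v) := by gcongr
      _ = 4 * a (r • v) * b (r • v) := by
        rw [map_smul a, map_smul b, smul_eq_mul, smul_eq_mul]
        ring

/-- The rotated quadratic cone `y² + Q x ≤ 4 (a x) (b x)` over pairs `(y, x)` with `y ≥ 0` and
`x ∈ P`. -/
def liftedCone (P : PointedCone ℝ V) (Q : QuadraticForm ℝ V) (a b : V →ₗ[ℝ] ℝ)
    (hQ : ∀ x, 0 ≤ Q x) (ha : ∀ x ∈ P, 0 ≤ a x) (hb : ∀ x ∈ P, 0 ≤ b x) :
    PointedCone ℝ (ℝ × V) :=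
  rotatedCone ((PointedCone.positive ℝ ℝ).prod P) (QuadraticMap.sq.prod Q)
    (a ∘ₗ LinearMap.snd ℝ ℝ V) (b ∘ₗ LinearMap.snd ℝ ℝ V)
    (QuadraticMap.nonneg_prod_iff.2 ⟨mul_self_nonneg, hQ⟩)
    (fun p hp ↦ ha p.2 hp.2) (fun p hp ↦ hb p.2 hp.2)

lemma mem_liftedCone {P : PointedCone ℝ V} {Q : QuadraticForm ℝ V} {a b : V →ₗ[ℝ] ℝ}
    {hQ : ∀ x, 0 ≤ Q x} {ha : ∀ x ∈ P, 0 ≤ a x} {hb : ∀ x ∈ P, 0 ≤ b x} {y : ℝ} {x : V} :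
    (y, x) ∈ liftedCone P Q a b hQ ha hb ↔
      (0 ≤ y ∧ x ∈ P) ∧ y ^ 2 + Q x ≤ 4 * a x * b x := by
  rw [sq]
  rfl

end RotatedCone

lemma exists_sqrt_le_and_sq_add_le_iff {r q M : ℝ} (hr : 0 ≤ r) :
    (∃ y, √r ≤ y ∧ y ^ 2 + q ≤ M) ↔ r + q ≤ M := by
  constructor
  · rintro ⟨y, hry, hy⟩
    exact (add_le_add_left (Real.sqrt_le_iff.1 hry).2 q).trans hy
  · intro h
    exact ⟨√r, le_rfl, by rwa [Real.sq_sqrt hr]⟩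

lemma snd_mem_convexHull {E F : Type*} [AddCommGroup E] [Module ℝ E] [AddCommGroup F]
    [Module ℝ F] {D : Set (E × F)} {S : Set F} (hD : ∀ p ∈ D, p.2 ∈ S) {p : E × F}
    (hp : p ∈ convexHull ℝ D) : p.2 ∈ convexHull ℝ S := by
  have snd_mem_image := Set.mem_image_of_mem (LinearMap.snd ℝ E F) hp
  rw [LinearMap.image_convexHull] at snd_mem_image
  exact convexHull_mono (Set.image_subset_iff.2 hD) snd_mem_image

lemma convexHull_setOf_zero_or_one (ι : Type*) [Finite ι] :
    convexHull ℝ {z : ι → ℝ | ∀ i, z i = 0 ∨ z i = 1} = {z | ∀ i, z i ∈ Set.Icc 0 1} := by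
  have cube_eq_pi : {z : ι → ℝ | ∀ i, z i = 0 ∨ z i = 1} = Set.univ.pi fun _ ↦ {0, 1} := by
    ext z; simp
  rw [cube_eq_pi, convexHull_pi, convexHull_pair, segment_eq_Icc zero_le_one]
  ext z; simp only [Set.mem_univ_pi, Set.mem_ofPred_eq]

lemma weightedSumSquares_nonneg {ι : Type*} [Fintype ι] {d : ι → ℝ} (hd : ∀ j, 0 ≤ d j)
    (v : ι → ℝ) : 0 ≤ QuadraticMap.weightedSumSquares ℝ d v := by
  rw [QuadraticMap.weightedSumSquares_apply]
  exact Finset.sum_nonneg fun j _ ↦ mul_nonneg (hd j) (mul_self_nonneg _)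

theorem conv_R_general {E F : Type*} [AddCommGroup E] [Module ℝ E] [AddCommGroup F] [Module ℝ F]
    (P : PointedCone ℝ E) (Q : QuadraticForm ℝ E) (a b : E →ₗ[ℝ] ℝ) (hQ : ∀ x, 0 ≤ Q x)
    (ha : ∀ x ∈ P, 0 ≤ a x) (hb : ∀ x ∈ P, 0 ≤ b x)
    (S : Set F) (g : F → ℝ) (hg : ∀ z ∈ S, 0 ≤ g z) :
    convexHull ℝ {w : E × F | w.1 ∈ P ∧ w.2 ∈ S ∧ g w.2 + Q w.1 ≤ 4 * a w.1 * b w.1} =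
      {w | w.1 ∈ P ∧ w.2 ∈ convexHull ℝ S ∧
        ∃ y, 0 ≤ y ∧ (y, w.2) ∈ convexHull ℝ {p : ℝ × F | p.2 ∈ S ∧ √(g p.2) ≤ p.1} ∧
          y ^ 2 + Q w.1 ≤ 4 * a w.1 * b w.1} := by
  set epi := {p : ℝ × F | p.2 ∈ S ∧ √(g p.2) ≤ p.1}
  have epi_nonneg : ∀ p ∈ epi, 0 ≤ p.1 := fun p hp ↦ (Real.sqrt_nonneg _).trans hp.2
  have eq_fiberProduct : {w : E × F | w.1 ∈ P ∧ w.2 ∈ S ∧ g w.2 + Q w.1 ≤ 4 * a w.1 * b w.1} =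
      fiberProduct (liftedCone P Q a b hQ ha hb) epi := by
    ext ⟨x, z⟩
    constructor
    · rintro ⟨hx, hz, h⟩
      obtain ⟨y, hgy, hy⟩ := (exists_sqrt_le_and_sq_add_le_iff (hg z hz)).2 h
      exact ⟨y, mem_liftedCone.2 ⟨⟨epi_nonneg (y, z) ⟨hz, hgy⟩, hx⟩, hy⟩, hz, hgy⟩
    · rintro ⟨y, hK, hz, hgy⟩
      obtain ⟨⟨-, hx⟩, hy⟩ := mem_liftedCone.1 hK
      exact ⟨hx, hz, (exists_sqrt_le_and_sq_add_le_iff (hg z hz)).1 ⟨y, hgy, hy⟩⟩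
  rw [eq_fiberProduct, convexHull_fiberProduct _ epi_nonneg]
  ext ⟨x, z⟩
  constructor
  · rintro ⟨y, hK, hyz⟩
    obtain ⟨⟨hy, hx⟩, h⟩ := mem_liftedCone.1 hK
    exact ⟨hx, snd_mem_convexHull (fun p (hp : p ∈ epi) ↦ hp.1) hyz, y, hy, hyz, h⟩
  · rintro ⟨hx, -, y, hy, hyz, h⟩
    exact ⟨y, mem_liftedCone.2 ⟨⟨hy, hx⟩, h⟩, hyz⟩

/-- Proposition 6 of Atamtürk–Gómez: convex hull of the set `R`. The continuous vector
lives in `ℝ^{m+2}` (so `m` here plays the role of `m−2` in the paper), with the last two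
coordinates `x_{m-1} = x ((Fin.last m).castSucc)` and `x_m = x (Fin.last (m+1))`, and
`d ∈ ℝ^m_+`. -/
theorem conv_R (n m : ℕ) (σ : ℝ) (c : Fin n → ℝ) (d : Fin m → ℝ)
    (hd : ∀ j, 0 ≤ d j)
    (hσc : ∀ z : Fin n → ℝ, (∀ i, z i = 0 ∨ z i = 1) → 0 ≤ σ + ∑ i, c i * z i) :
    convexHull ℝ {w : (Fin (m+2) → ℝ) × (Fin n → ℝ) |
      (∀ j, 0 ≤ w.1 j) ∧ (∀ i, w.2 i = 0 ∨ w.2 i = 1) ∧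
      σ + ∑ i, c i * w.2 i + ∑ j : Fin m, d j * (w.1 j.castSucc.castSucc)^2
        ≤ 4 * w.1 ((Fin.last m).castSucc) * w.1 (Fin.last (m+1))}
    = {w : (Fin (m+2) → ℝ) × (Fin n → ℝ) |
      (∀ j, 0 ≤ w.1 j) ∧ (∀ i, w.2 i ∈ Set.Icc (0:ℝ) 1) ∧
      ∃ y : ℝ, 0 ≤ y ∧
        (y, w.2) ∈ convexHull ℝ {yz : ℝ × (Fin n → ℝ) |
          (∀ i, yz.2 i = 0 ∨ yz.2 i = 1) ∧
          Real.sqrt (σ + ∑ i, c i * yz.2 i) ≤ yz.1} ∧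
        y^2 + ∑ j : Fin m, d j * (w.1 j.castSucc.castSucc)^2
          ≤ 4 * w.1 ((Fin.last m).castSucc) * w.1 (Fin.last (m+1))} := by
  simpa [convexHull_setOf_zero_or_one, QuadraticMap.weightedSumSquares_apply, Pi.le_def, ← sq] using
    conv_R_general (PointedCone.positive ℝ (Fin (m + 2) → ℝ))
      ((QuadraticMap.weightedSumSquares ℝ d).comp
        (LinearMap.funLeft ℝ ℝ fun j : Fin m ↦ j.castSucc.castSucc))
      (LinearMap.proj (Fin.last m).castSucc) (LinearMap.proj (Fin.last (m + 1)))
      (fun _ ↦ weightedSumSquares_nonneg hd _) (fun _ hx ↦ hx _) (fun _ hx ↦ hx _)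
      {z : Fin n → ℝ | ∀ i, z i = 0 ∨ z i = 1} (fun z ↦ σ + ∑ i, c i * z i) hσc
end

section
/- Let p ≥ 1, η₂ ∈ {0,1}, and define f(z) := (Σ_{i∈[n]} z_i + η₂)^{1/p} for z ∈ {0,1}^n (which equals the ℓ_p-norm of the vector [z; η₂] for binary z). Then {(x,t,z) ∈ ℝ^m_+ × ℝ_+ × {0,1}^n : (Σ_{j∈[m]} x_j^p + Σ_{i∈[n]} z_i^p + η₂)^{1/p} ≤ t} = {(x,t,z) ∈ ℝ^m_+ × ℝ_+ × {0,1}^n : ∃ y ∈ ℝ such that y ≥ f(z) and (y^p + Σ_{j∈[m]} x_j^p)^{1/p} ≤ t}. -/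
/-!
For fixed `x`, the lifted constraint only tightens as the epigraph variable `y` grows, so `y` may be
taken equal to its lower bound `f(z)`; and `f(z) ^ p = ∑ i, z i + η₂` recovers the original norm
constraint, because `z i ^ p = z i` for binary `z`.
-/

theorem exists_le_and_map_le_iff_of_monotoneOn {α β : Type*} [Preorder α] [Preorder β]
    {g : α → β} {a : α} {t : β} (hg : MonotoneOn g (Set.Ici a)) :
    (∃ y, a ≤ y ∧ g y ≤ t) ↔ g a ≤ t where
  mp := fun ⟨_, hay, hyt⟩ => (hg Set.self_mem_Ici hay hay).trans hyt
  mpr := fun hat => ⟨a, le_rfl, hat⟩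

theorem monotoneOn_rpow_add_rpow_inv {p u : ℝ} (hp : 0 ≤ p) (hu : 0 ≤ u) :
    MonotoneOn (fun y : ℝ => (y ^ p + u) ^ p⁻¹) (Set.Ici 0) := by
  intro a ha b _ hab
  have ha_rpow : 0 ≤ a ^ p := Real.rpow_nonneg ha p
  have hab_rpow : a ^ p ≤ b ^ p := Real.rpow_le_rpow ha hab hp
  exact Real.rpow_le_rpow (by positivity) (by gcongr) (inv_nonneg.2 hp)

theorem exists_rpow_inv_le_and_rpow_add_rpow_inv_le_iff {p s u t : ℝ} (hp : 0 < p)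
    (hs : 0 ≤ s) (hu : 0 ≤ u) :
    (∃ y, s ^ p⁻¹ ≤ y ∧ (y ^ p + u) ^ p⁻¹ ≤ t) ↔ (s + u) ^ p⁻¹ ≤ t := by
  have hmono : MonotoneOn (fun y : ℝ => (y ^ p + u) ^ p⁻¹) (Set.Ici (s ^ p⁻¹)) :=
    (monotoneOn_rpow_add_rpow_inv hp.le hu).mono
      (Set.Ici_subset_Ici.2 (Real.rpow_nonneg hs p⁻¹))
  rw [exists_le_and_map_le_iff_of_monotoneOn hmono, Real.rpow_inv_rpow hs hp.ne']

theorem rpow_eq_self_of_eq_zero_or_one {p a : ℝ} (hp : p ≠ 0) (ha : a = 0 ∨ a = 1) :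
    a ^ p = a := by
  rcases ha with rfl | rfl
  · exact Real.zero_rpow hp
  · exact Real.one_rpow p

theorem drccp_norm_lifted_general {ι κ : Type*} [Fintype ι] [Fintype κ] {p η₂ : ℝ}
    (hp : 0 < p) (hη : 0 ≤ η₂) :
    {w : (κ → ℝ) × ℝ × (ι → ℝ) |
      (∀ j, 0 ≤ w.1 j) ∧ 0 ≤ w.2.1 ∧ (∀ i, w.2.2 i = 0 ∨ w.2.2 i = 1) ∧
      (∑ j, (w.1 j) ^ p + ∑ i, (w.2.2 i) ^ p + η₂) ^ (1/p) ≤ w.2.1}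
    = {w : (κ → ℝ) × ℝ × (ι → ℝ) |
      (∀ j, 0 ≤ w.1 j) ∧ 0 ≤ w.2.1 ∧ (∀ i, w.2.2 i = 0 ∨ w.2.2 i = 1) ∧
      ∃ y : ℝ, (∑ i, w.2.2 i + η₂) ^ (1/p) ≤ y ∧
        (y ^ p + ∑ j, (w.1 j) ^ p) ^ (1/p) ≤ w.2.1} := by
  ext ⟨x, t, z⟩
  simp only [Set.mem_ofPred_eq, one_div]
  refine and_congr_right fun hx => and_congr_right fun _ => and_congr_right fun hz => ?_
  have hz_rpow (i : ι) : z i ^ p = z i := rpow_eq_self_of_eq_zero_or_one hp.ne' (hz i)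
  have hz_nonneg (i : ι) : 0 ≤ z i := by
    rcases hz i with h | h <;> simp only [h, le_refl, zero_le_one]
  have hs : 0 ≤ ∑ i, z i + η₂ := add_nonneg (Fintype.sum_nonneg hz_nonneg) hη
  have hu : 0 ≤ ∑ j, x j ^ p := Fintype.sum_nonneg fun j => Real.rpow_nonneg (hx j) p
  simp only [hz_rpow]
  rw [exists_rpow_inv_le_and_rpow_add_rpow_inv_le_iff hp hs hu, add_assoc, add_comm]

/-- DR-CCP norm constraint: for `p ≥ 1` and `η₂ ∈ {0,1}`, the set
`{(x,t,z) ∈ ℝ^m_+ × ℝ_+ × {0,1}^n : ‖[x; z; η₂]‖_p ≤ t}` equals its lifted version with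
an epigraph variable `y ≥ f(z) = (Σ_i z_i + η₂)^{1/p}` (for binary `z`, `z_i^p = z_i`).
Here real exponentiation is `Real.rpow`. -/
theorem drccp_norm_lifted (n m : ℕ) (p : ℝ) (hp : 1 ≤ p)
    (η₂ : ℝ) (hη : η₂ = 0 ∨ η₂ = 1) :
    {w : (Fin m → ℝ) × ℝ × (Fin n → ℝ) |
      (∀ j, 0 ≤ w.1 j) ∧ 0 ≤ w.2.1 ∧ (∀ i, w.2.2 i = 0 ∨ w.2.2 i = 1) ∧
      (∑ j, (w.1 j) ^ p + ∑ i, (w.2.2 i) ^ p + η₂) ^ (1/p) ≤ w.2.1}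
    = {w : (Fin m → ℝ) × ℝ × (Fin n → ℝ) |
      (∀ j, 0 ≤ w.1 j) ∧ 0 ≤ w.2.1 ∧ (∀ i, w.2.2 i = 0 ∨ w.2.2 i = 1) ∧
      ∃ y : ℝ, (∑ i, w.2.2 i + η₂) ^ (1/p) ≤ y ∧
        (y ^ p + ∑ j, (w.1 j) ^ p) ^ (1/p) ≤ w.2.1} :=
  drccp_norm_lifted_general (zero_lt_one.trans_le hp) (by rcases hη with rfl | rfl <;> simp)
end
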